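/- arXiv:1904.06650 — 6 statements merged into one kernel-verified Lean document; each statement's English description precedes it below -/
import Mathlib

section
/- Let γ : e → e be a Lie algebra endomorphism with γ(m) = m for all m ∈ a, and let ψ : g → g be the unique linear map with ψ ∘ p = p ∘ γ (which exists since γ(a) ⊆ a, and is a Lie algebra endomorphism of g). Then there exists an F-linear map λ : g → a such that β(ψ x, ψ y) - β(x, y) = ⁅s x, λ y⁆ - ⁅s y, λ x⁆ - λ⁅x, y⁆ for all x, y ∈ g. -/
/-- The 2-cochain associated to a linear section `s` of the projection `e → e/a`:
`β x y = ⁅s x, s y⁆ - s ⁅x, y⁆`. -/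
def lieBeta {F : Type*} [Field F]
    {e : Type*} [LieRing e] [LieAlgebra F e]
    (a : LieIdeal F e) (s : (e ⧸ a) →ₗ[F] e) (x y : e ⧸ a) : e :=
  ⁅s x, s y⁆ - s ⁅x, y⁆

/-- If `γ` is a Lie algebra endomorphism of `e` fixing the abelian ideal `a` pointwise and
`ψ` is the induced (unique) linear map on `g = e/a` with `ψ ∘ p = p ∘ γ`, then
`β (ψ x) (ψ y) - β x y` is a coboundary. -/
theorem stmt9 {F : Type*} [Field F] [CharZero F]
    {e : Type*} [LieRing e] [LieAlgebra F e]
    (a : LieIdeal F e)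
    (hab : ∀ m ∈ a, ∀ n ∈ a, ⁅m, n⁆ = (0 : e))
    (s : (e ⧸ a) →ₗ[F] e)
    (hs : ∀ x : e ⧸ a, LieSubmodule.Quotient.mk (N := a) (s x) = x)
    (γ : e →ₗ⁅F⁆ e)
    (hγ : ∀ m ∈ a, γ m = m)
    (ψ : (e ⧸ a) →ₗ[F] (e ⧸ a))
    (hψ : ∀ x : e, ψ (LieSubmodule.Quotient.mk (N := a) x) =
      LieSubmodule.Quotient.mk (N := a) (γ x)) :
    ∃ l : (e ⧸ a) →ₗ[F] e, (∀ x, l x ∈ a) ∧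
      ∀ x y : e ⧸ a,
        lieBeta a s (ψ x) (ψ y) - lieBeta a s x y =
          ⁅s x, l y⁆ - ⁅s y, l x⁆ - l ⁅x, y⁆ := by
  have key : ∀ z : e, ∀ m ∈ a, ⁅γ z, m⁆ = ⁅z, m⁆ := by
    intro z m hm
    have h1 : ⁅z, m⁆ ∈ a := lie_mem_right F e a z m hm
    have h2 := hγ _ h1
    rw [LieHom.map_lie, hγ m hm] at h2
    exact h2
  have hsub : ∀ x y : e, LieSubmodule.Quotient.mk (N := a) (x - y) =
      LieSubmodule.Quotient.mk (N := a) x - LieSubmodule.Quotient.mk (N := a) y :=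
    fun _ _ => rfl
  have hu : ∀ x, s (ψ x) - γ (s x) ∈ a := by
    intro x
    rw [← LieSubmodule.Quotient.mk_eq_zero', hsub, hs, ← hψ, hs, sub_self]
  have hβ : ∀ x y, ⁅s x, s y⁆ - s ⁅x, y⁆ ∈ a := by
    intro x y
    rw [← LieSubmodule.Quotient.mk_eq_zero', hsub, hs,
      LieSubmodule.Quotient.mk_bracket, hs, hs, sub_self]
  have hψl : ∀ x y, ψ ⁅x, y⁆ = ⁅ψ x, ψ y⁆ := by
    intro x y
    conv_lhs => rw [← hs x, ← hs y, ← LieSubmodule.Quotient.mk_bracket, hψ, LieHom.map_lie,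
      LieSubmodule.Quotient.mk_bracket, ← hψ, ← hψ, hs, hs]
  refine ⟨s ∘ₗ ψ - (γ : e →ₗ[F] e) ∘ₗ s, fun x => hu x, fun x y => ?_⟩
  have h1 := hab _ (hu x) _ (hu y)
  have h2 := key (s x) _ (hu y)
  have h3 := key (s y) _ (hu x)
  have h4 := hγ _ (hβ x y)
  change (⁅s (ψ x), s (ψ y)⁆ - s ⁅ψ x, ψ y⁆) - (⁅s x, s y⁆ - s ⁅x, y⁆) =
    ⁅s x, s (ψ y) - γ (s y)⁆ - ⁅s y, s (ψ x) - γ (s x)⁆ - (s (ψ ⁅x, y⁆) - γ (s ⁅x, y⁆))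
  rw [← h2, ← h3, ← h4, hψl, map_sub, LieHom.map_lie]
  simp only [lie_sub, sub_lie] at h1 ⊢
  rw [← lie_skew (γ (s y)) (s (ψ x)), ← lie_skew (γ (s y)) (γ (s x))]
  rw [← sub_eq_zero, ← h1]
  abel
end

section
/- Let ψ : g → g be a Lie algebra endomorphism such that ⁅s(ψ x), m⁆ = ⁅s x, m⁆ for all x ∈ g, m ∈ a, and suppose there exists an F-linear map λ : g → a with β(ψ x, ψ y) - β(x, y) = ⁅s x, λ y⁆ - ⁅s y, λ x⁆ - λ⁅x, y⁆ for all x, y ∈ g. Then there exists a Lie algebra endomorphism γ : e → e with γ(m) = m for all m ∈ a and p ∘ γ = ψ ∘ p. -/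
/-- If `ψ` is a Lie algebra endomorphism of `g = e/a` preserving the action of `g` on `a`
and `β (ψ x) (ψ y) - β x y` is a coboundary, then `ψ` lifts to a Lie algebra endomorphism
of `e` fixing `a` pointwise. -/
theorem stmt10 {F : Type*} [Field F] [CharZero F]
    {e : Type*} [LieRing e] [LieAlgebra F e]
    (a : LieIdeal F e)
    (hab : ∀ m ∈ a, ∀ n ∈ a, ⁅m, n⁆ = (0 : e))
    (s : (e ⧸ a) →ₗ[F] e)
    (hs : ∀ x : e ⧸ a, LieSubmodule.Quotient.mk (N := a) (s x) = x)
    (ψ : (e ⧸ a) →ₗ⁅F⁆ (e ⧸ a))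
    (hψ : ∀ (x : e ⧸ a), ∀ m ∈ a, ⁅s (ψ x), m⁆ = ⁅s x, m⁆)
    (l : (e ⧸ a) →ₗ[F] e) (hl : ∀ x, l x ∈ a)
    (hcob : ∀ x y : e ⧸ a,
      lieBeta a s (ψ x) (ψ y) - lieBeta a s x y = ⁅s x, l y⁆ - ⁅s y, l x⁆ - l ⁅x, y⁆) :
    ∃ γ : e →ₗ⁅F⁆ e, (∀ m ∈ a, γ m = m) ∧
      ∀ x : e, LieSubmodule.Quotient.mk (N := a) (γ x) =
        ψ (LieSubmodule.Quotient.mk (N := a) x) := by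
  let p : e →ₗ[F] (e ⧸ a) := (LieSubmodule.Quotient.mk' a : e →ₗ⁅F, e⁆ e ⧸ a)
  have hp : ∀ z, LieSubmodule.Quotient.mk (N := a) z = p z := fun z => rfl
  have hplie : ∀ z w, p ⁅z, w⁆ = ⁅p z, p w⁆ := fun z w => LieSubmodule.Quotient.mk_bracket _ z w
  have hp0 : ∀ m, p m = 0 ↔ m ∈ a := fun m => LieSubmodule.Quotient.mk_eq_zero' (N := a)
  simp only [hp] at hs ⊢
  have hm : ∀ z, z - s (p z) ∈ a := fun z => by
    rw [← hp0, map_sub, hs, sub_self]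
  let g : e →ₗ[F] e := LinearMap.id - s ∘ₗ p + s ∘ₗ (ψ : (e ⧸ a) →ₗ[F] (e ⧸ a)) ∘ₗ p - l ∘ₗ p
  have hg : ∀ z, g z = z - s (p z) + s (ψ (p z)) - l (p z) := fun z => rfl
  have hlie : ∀ z w, g ⁅z, w⁆ = ⁅g z, g w⁆ := by
    intro z w
    rw [hg, hg, hg, hplie, LieHom.map_lie]
    obtain ⟨m, hme⟩ : ∃ m, m = z - s (p z) := ⟨_, rfl⟩
    obtain ⟨n, hne⟩ : ∃ n, n = w - s (p w) := ⟨_, rfl⟩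
    have hma : m ∈ a := hme ▸ hm z
    have hna : n ∈ a := hne ▸ hm w
    have hz : z = s (p z) + m := by rw [hme]; abel
    have hw : w = s (p w) + n := by rw [hne]; abel
    rw [← hme, ← hne]
    have hzw : ⁅z, w⁆ = ⁅s (p z) + m, s (p w) + n⁆ := by rw [← hz, ← hw]
    rw [hzw]
    generalize p z = x
    generalize p w = y
    have h := hcob x y
    unfold lieBeta at h
    have e1 := hab m hma n hna
    have e2 := hab m hma _ (hl y)
    have e3 := hab _ (hl x) n hna
    have e4 := hab _ (hl x) _ (hl y)
    have e5 := hψ x n hna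
    have e6 := hψ x _ (hl y)
    have e7 : ⁅m, s (ψ y)⁆ = ⁅m, s y⁆ := by
      rw [← lie_skew, hψ y m hma, lie_skew]
    have e8 : ⁅l x, s (ψ y)⁆ = - ⁅s y, l x⁆ := by
      rw [← lie_skew, hψ y _ (hl x)]
    simp only [add_lie, lie_add, sub_lie, lie_sub, e1, e2, e3, e4, e5, e6, e7, e8]
    rw [← sub_eq_zero] at h ⊢
    rw [← neg_eq_zero]
    refine Eq.trans ?_ h
    abel
  refine ⟨{ g with map_lie' := fun {z w} => hlie z w }, ?_, ?_⟩
  · intro m hma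
    change g m = m
    rw [hg, (hp0 m).2 hma]
    simp
  · intro z
    change p (g z) = _
    rw [hg, map_sub, map_add, map_sub, hs, hs, (hp0 _).2 (hl _)]
    simp
end

section
/- Let φ : a → a be an e-equivariant endomorphism of a, and suppose there exists an F-linear map λ : g → a with φ(β(x, y)) = ⁅s x, λ y⁆ - ⁅s y, λ x⁆ - λ⁅x, y⁆ for all x, y ∈ g. Then there exists a Lie algebra endomorphism f : e → e with f(x) - x ∈ a for all x ∈ e and f(m) = m + φ(m) for all m ∈ a. -/
/-- If `φ` is an `e`-equivariant endomorphism of the abelian ideal `a` such that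
`φ ∘ β` is a coboundary, then `φ` extends to a Lie algebra endomorphism `f` of `e`
with `f x - x ∈ a` for all `x` and `f m = m + φ m` on `a`. -/
theorem stmt13 {F : Type*} [Field F] [CharZero F]
    {e : Type*} [LieRing e] [LieAlgebra F e]
    (a : LieIdeal F e)
    (hab : ∀ m ∈ a, ∀ n ∈ a, ⁅m, n⁆ = (0 : e))
    (s : (e ⧸ a) →ₗ[F] e)
    (hs : ∀ x : e ⧸ a, LieSubmodule.Quotient.mk (N := a) (s x) = x)
    (φ : a →ₗ[F] a)
    (hφ : ∀ (x : e) (m : a), φ ⁅x, m⁆ = ⁅x, φ m⁆)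
    (hcob : ∃ l : (e ⧸ a) →ₗ[F] e, (∀ x, l x ∈ a) ∧
      ∀ (x y : e ⧸ a) (hxy : lieBeta a s x y ∈ a),
        (φ ⟨lieBeta a s x y, hxy⟩ : e) = ⁅s x, l y⁆ - ⁅s y, l x⁆ - l ⁅x, y⁆) :
    ∃ f : e →ₗ⁅F⁆ e, (∀ x, f x - x ∈ a) ∧ ∀ m : a, f m = m + (φ m : e) := by
  obtain ⟨l, hla, hl⟩ := hcob
  let p : e →ₗ[F] (e ⧸ a) := (LieSubmodule.Quotient.mk' a : e →ₗ⁅F, e⁆ e ⧸ a)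
  have hps : ∀ z, p (s z) = z := hs
  have hker : ∀ z : e, p z = 0 ↔ z ∈ a := fun z => LieSubmodule.Quotient.mk_eq_zero a
  have hpl : ∀ x y : e, p ⁅x, y⁆ = ⁅p x, p y⁆ := fun x y => LieSubmodule.Quotient.mk_bracket a x y
  have hmem : ∀ x : e, x - s (p x) ∈ a := fun x => by
    rw [← hker, map_sub, hps, sub_self]
  have hβ : ∀ x y, lieBeta a s x y ∈ a := fun x y => by
    rw [← hker, lieBeta, map_sub, hpl, hps, hps, hps, sub_self]
  let r : e →ₗ[F] a :=
    { toFun := fun x => ⟨x - s (p x), hmem x⟩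
      map_add' := fun x y => by
        apply Subtype.ext
        simp only [map_add, LieSubmodule.coe_add]
        abel
      map_smul' := fun c x => by
        apply Subtype.ext
        simp [smul_sub] }
  have hr : ∀ x, (r x : e) = x - s (p x) := fun x => rfl
  have hx : ∀ x, x = s (p x) + (r x : e) := fun x => by rw [hr]; abel
  have hact : ∀ x : e, ∀ m ∈ a, ⁅x, m⁆ = ⁅s (p x), m⁆ := fun x m hm => by
    conv_lhs => rw [hx x]
    rw [add_lie, hab _ (r x).2 _ hm, add_zero]
  have hrb : ∀ x y, r ⁅x, y⁆ = ⟨lieBeta a s (p x) (p y), hβ _ _⟩ + ⁅x, r y⁆ - ⁅y, r x⁆ := by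
    intro x y
    apply Subtype.ext
    simp only [LieSubmodule.coe_add, LieSubmodule.coe_sub, LieSubmodule.coe_bracket]
    rw [hact x _ (r y).2, hact y _ (r x).2, hr ⁅x, y⁆, hpl, lieBeta]
    have h : ⁅x, y⁆ = ⁅s (p x), s (p y)⁆ + ⁅s (p x), (r y : e)⁆ - ⁅s (p y), (r x : e)⁆ := by
      conv_lhs => rw [hx x, hx y]
      rw [add_lie, lie_add, lie_add, hab _ (r x).2 _ (r y).2, ← lie_skew (r x : e) (s (p y))]
      abel
    rw [h]
    abel
  let D : e →ₗ[F] e := (a.toSubmodule.subtype ∘ₗ φ ∘ₗ r) + l ∘ₗ p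
  have hD : ∀ x, D x = (φ (r x) : e) + l (p x) := fun x => rfl
  have hDa : ∀ x, D x ∈ a := fun x => by
    rw [hD]; exact add_mem (φ (r x)).2 (hla _)
  have hDl : ∀ x y, D ⁅x, y⁆ = ⁅x, D y⁆ - ⁅y, D x⁆ := by
    intro x y
    rw [hD, hrb, map_sub, map_add, hφ, hφ]
    simp only [LieSubmodule.coe_add, LieSubmodule.coe_sub, LieSubmodule.coe_bracket]
    rw [hl, hD, hD, lie_add, lie_add, hact x _ (hla (p y)), hact y _ (hla (p x)), hpl]
    abel
  refine ⟨{ (LinearMap.id + D : e →ₗ[F] e) with map_lie' := ?_ }, ?_, ?_⟩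
  · intro x y
    change ⁅x, y⁆ + D ⁅x, y⁆ = ⁅x + D x, y + D y⁆
    rw [hDl, add_lie, lie_add, lie_add, hab _ (hDa x) _ (hDa y), ← lie_skew (D x) y]
    abel
  · intro x
    change x + D x - x ∈ a
    rw [add_sub_cancel_left]
    exact hDa x
  · intro m
    change (m : e) + D m = _
    have h0 : p m = 0 := (hker _).2 m.2
    have h1 : r m = m := by
      apply Subtype.ext
      rw [hr, h0, map_zero, sub_zero]
    rw [hD, h0, h1, map_zero, add_zero]
end

section
/- Suppose the section s is a Lie algebra homomorphism. Then for every e-equivariant endomorphism φ of a there exists a Lie algebra endomorphism f : e → e with f(x) - x ∈ a for all x ∈ e and f(m) = φ(m) for all m ∈ a. -/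
/-- If the linear section `s` of `p : e → e/a` is a Lie algebra homomorphism, then every
`e`-equivariant endomorphism `φ` of the abelian ideal `a` extends to a Lie algebra
endomorphism `f` of `e` with `f x - x ∈ a` for all `x` and `f m = φ m` on `a`. -/
theorem stmt14 {F : Type*} [Field F] [CharZero F]
    {e : Type*} [LieRing e] [LieAlgebra F e]
    (a : LieIdeal F e)
    (hab : ∀ m ∈ a, ∀ n ∈ a, ⁅m, n⁆ = (0 : e))
    (s : (e ⧸ a) →ₗ[F] e)
    (hs : ∀ x : e ⧸ a, LieSubmodule.Quotient.mk (N := a) (s x) = x)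
    (hsh : ∀ x y : e ⧸ a, s ⁅x, y⁆ = ⁅s x, s y⁆)
    (φ : a →ₗ[F] a)
    (hφ : ∀ (x : e) (m : a), φ ⁅x, m⁆ = ⁅x, φ m⁆) :
    ∃ f : e →ₗ⁅F⁆ e, (∀ x, f x - x ∈ a) ∧ ∀ m : a, f m = (φ m : e) := by
  let p : e →ₗ[F] (e ⧸ a) := (LieSubmodule.Quotient.mk' a : e →ₗ⁅F, e⁆ (e ⧸ a))
  have hp : ∀ x, p x = LieSubmodule.Quotient.mk (N := a) x := fun x => rfl
  have hpb : ∀ x y, p ⁅x, y⁆ = ⁅p x, p y⁆ := fun x y => LieSubmodule.Quotient.mk_bracket a x y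
  have hmem : ∀ x, x - s (p x) ∈ a := by
    intro x
    have h : p (x - s (p x)) = 0 := by
      rw [map_sub, hp (s (p x)), hs, sub_self]
    exact (LieSubmodule.Quotient.mk_eq_zero (N := a)).1 h
  have hpa : ∀ m : a, p (m : e) = 0 := fun m =>
    (LieSubmodule.Quotient.mk_eq_zero (N := a)).2 m.2
  let q : e →ₗ[F] a :=
    { toFun := fun x => ⟨x - s (p x), hmem x⟩
      map_add' := by
        intro x y
        apply Subtype.ext
        simp only [map_add, LieSubmodule.coe_add]
        abel
      map_smul' := by
        intro c x
        apply Subtype.ext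
        simp only [map_smul, LieSubmodule.coe_smul, smul_sub, RingHom.id_apply] }
  have hq : ∀ x, ((q x : a) : e) = x - s (p x) := fun x => rfl
  have hqa : ∀ m : a, q (m : e) = m := by
    intro m
    apply Subtype.ext
    rw [hq, hpa, map_zero, sub_zero]
  have hqb : ∀ x y, q ⁅x, y⁆ = ⁅s (p x), q y⁆ - ⁅s (p y), q x⁆ := by
    intro x y
    apply Subtype.ext
    have h := hab _ (hmem x) _ (hmem y)
    rw [LieSubmodule.coe_sub, LieSubmodule.coe_bracket, LieSubmodule.coe_bracket, hq, hq, hq,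
      hpb, hsh]
    simp only [lie_sub, sub_lie] at h ⊢
    rw [← lie_skew (s (p y)) x, ← lie_skew (s (p y)) (s (p x))]
    rw [← sub_eq_zero, ← h]
    abel
  let g : e →ₗ[F] e := s ∘ₗ p + (a : Submodule F e).subtype ∘ₗ φ ∘ₗ q
  have hg : ∀ x, g x = s (p x) + (φ (q x) : e) := fun x => rfl
  refine ⟨{ g with map_lie' := ?_ }, ?_, ?_⟩
  · intro x y
    change g ⁅x, y⁆ = ⁅g x, g y⁆
    have h := hab _ (φ (q x)).2 _ (φ (q y)).2
    rw [hg, hg, hg, hpb, hsh, hqb, map_sub, hφ, hφ, LieSubmodule.coe_sub,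
      LieSubmodule.coe_bracket, LieSubmodule.coe_bracket, add_lie, lie_add, lie_add, h,
      ← lie_skew (φ (q x) : e) (s (p y))]
    abel
  · intro x
    change g x - x ∈ a
    have h : g x - x = (φ (q x) - q x : a) := by
      rw [hg, LieSubmodule.coe_sub, hq]
      abel
    rw [h]
    exact Subtype.property _
  · intro m
    change g m = _
    rw [hg, hpa, map_zero, zero_add, hqa]
end

section
/- Suppose the section s is a Lie algebra homomorphism. Then every Lie algebra endomorphism ψ : g → g satisfying ⁅s(ψ x), m⁆ = ⁅s x, m⁆ for all x ∈ g, m ∈ a lifts to e: there exists a Lie algebra endomorphism γ : e → e with γ(m) = m for all m ∈ a and p ∘ γ = ψ ∘ p. -/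
/-- If the linear section `s` of `p : e → e/a` is a Lie algebra homomorphism, then every
Lie algebra endomorphism `ψ` of `g = e/a` preserving the action of `g` on the abelian
ideal `a` lifts to a Lie algebra endomorphism `γ` of `e` fixing `a` pointwise with
`p ∘ γ = ψ ∘ p`. -/
theorem stmt15 {F : Type*} [Field F] [CharZero F]
    {e : Type*} [LieRing e] [LieAlgebra F e]
    (a : LieIdeal F e)
    (hab : ∀ m ∈ a, ∀ n ∈ a, ⁅m, n⁆ = (0 : e))
    (s : (e ⧸ a) →ₗ[F] e)
    (hs : ∀ x : e ⧸ a, LieSubmodule.Quotient.mk (N := a) (s x) = x)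
    (hsh : ∀ x y : e ⧸ a, s ⁅x, y⁆ = ⁅s x, s y⁆)
    (ψ : (e ⧸ a) →ₗ⁅F⁆ (e ⧸ a))
    (hψ : ∀ (x : e ⧸ a), ∀ m ∈ a, ⁅s (ψ x), m⁆ = ⁅s x, m⁆) :
    ∃ γ : e →ₗ⁅F⁆ e, (∀ m ∈ a, γ m = m) ∧
      ∀ x : e, LieSubmodule.Quotient.mk (N := a) (γ x) =
        ψ (LieSubmodule.Quotient.mk (N := a) x) := by
  let p : e →ₗ[F] (e ⧸ a) := (LieSubmodule.Quotient.mk' a : e →ₗ[F] (e ⧸ a))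
  have hp : ∀ x, LieSubmodule.Quotient.mk (N := a) x = p x := fun x => rfl
  have hpb : ∀ x y, p ⁅x, y⁆ = ⁅p x, p y⁆ := fun x y => LieSubmodule.Quotient.mk_bracket a x y
  have hp0 : ∀ m, p m = 0 ↔ m ∈ a := fun m => LieSubmodule.Quotient.mk_eq_zero'
  have hps : ∀ x, p (s x) = x := hs
  have hk : ∀ x, x - s (p x) ∈ a := fun x => by
    rw [← hp0, map_sub, hps, sub_self]
  clear_value p
  let g : e →ₗ[F] e := LinearMap.id - s ∘ₗ p + s ∘ₗ (ψ : (e ⧸ a) →ₗ[F] (e ⧸ a)) ∘ₗ p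
  have hg : ∀ x, g x = x - s (p x) + s (ψ (p x)) := fun x => rfl
  refine ⟨{ g with map_lie' := ?_ }, ?_, ?_⟩
  · intro x y
    change g ⁅x, y⁆ = ⁅g x, g y⁆
    rw [hg, hg, hg, hpb, LieHom.map_lie, hsh, hsh]
    have h1 := hψ (p x) _ (hk y)
    have h2 := hψ (p y) _ (hk x)
    have h3 := hab _ (hk x) _ (hk y)
    have h4 : ⁅x - s (p x), s (ψ (p y))⁆ = ⁅x - s (p x), s (p y)⁆ := by
      rw [← lie_skew, h2, lie_skew]
    rw [add_lie, lie_add, lie_add, h1, h3, h4]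
    have h5 := h3
    simp only [sub_lie, lie_sub] at h5 ⊢
    have h6 : ⁅x, y⁆ = ⁅s (p x), y⁆ + (⁅x, s (p y)⁆ - ⁅s (p x), s (p y)⁆) := by
      rw [← sub_eq_zero, ← h5]; abel
    rw [h6]; abel
  · intro m hm
    change g m = m
    rw [hg, (hp0 m).2 hm]; simp
  · intro x
    change LieSubmodule.Quotient.mk (N := a) (g x) = _
    rw [hp, hp, hg, map_add, map_sub, hps, hps]; simp
end

section
/- Let φ : a → a be an e-equivariant linear automorphism of a, and suppose there exists an F-linear map λ : g → a with φ(β(x, y)) - β(x, y) = ⁅s x, λ y⁆ - ⁅s y, λ x⁆ - λ⁅x, y⁆ for all x, y ∈ g. Then there exists a Lie algebra automorphism f of e with f(x) - x ∈ a for all x ∈ e and f(m) = φ(m) for all m ∈ a. -/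
/-- If `φ` is an `e`-equivariant automorphism of the abelian ideal `a` such that
`φ ∘ β - β` is a coboundary, then `φ` extends to a Lie algebra automorphism `f` of `e`
with `f x - x ∈ a` for all `x` and `f m = φ m` on `a`. -/
theorem stmt19 {F : Type*} [Field F] [CharZero F]
    {e : Type*} [LieRing e] [LieAlgebra F e]
    (a : LieIdeal F e)
    (hab : ∀ m ∈ a, ∀ n ∈ a, ⁅m, n⁆ = (0 : e))
    (s : (e ⧸ a) →ₗ[F] e)
    (hs : ∀ x : e ⧸ a, LieSubmodule.Quotient.mk (N := a) (s x) = x)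
    (φ : a →ₗ[F] a)
    (hφ : ∀ (x : e) (m : a), φ ⁅x, m⁆ = ⁅x, φ m⁆)
    (hbij : Function.Bijective φ)
    (hcob : ∃ l : (e ⧸ a) →ₗ[F] e, (∀ x, l x ∈ a) ∧
      ∀ (x y : e ⧸ a) (hxy : lieBeta a s x y ∈ a),
        (φ ⟨lieBeta a s x y, hxy⟩ : e) - lieBeta a s x y =
          ⁅s x, l y⁆ - ⁅s y, l x⁆ - l ⁅x, y⁆) :
    ∃ f : e →ₗ⁅F⁆ e, Function.Bijective f ∧ (∀ x, f x - x ∈ a) ∧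
      ∀ m : a, f m = (φ m : e) := by
  obtain ⟨l, hl, hc⟩ := hcob
  let P : e →ₗ[F] (e ⧸ a) := (LieSubmodule.Quotient.mk' a : e →ₗ⁅F, e⁆ e ⧸ a)
  have hPs : ∀ x, P (s x) = x := hs
  have hPb : ∀ x y, P ⁅x, y⁆ = ⁅P x, P y⁆ := fun x y => LieSubmodule.Quotient.mk_bracket a x y
  have hP0 : ∀ x, P x = 0 ↔ x ∈ a := fun x => LieSubmodule.Quotient.mk_eq_zero a
  have hPa : ∀ m : a, P (m : e) = 0 := fun m => (hP0 _).2 m.2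
  have hqm : ∀ x, x - s (P x) ∈ a := fun x => by
    rw [← hP0, map_sub, hPs, sub_self]
  let q : e →ₗ[F] a :=
    LinearMap.codRestrict a.toSubmodule (LinearMap.id - s ∘ₗ P) hqm
  have hq : ∀ x, (q x : e) = x - s (P x) := fun x => rfl
  have hqa : ∀ m : a, q (m : e) = m := fun m => by
    apply Subtype.ext; rw [hq, hPa, map_zero, sub_zero]
  have hqs : ∀ x, q (s x) = 0 := fun x => by
    apply Subtype.ext; rw [hq, hPs, sub_self]; rfl
  have hβ : ∀ x y, lieBeta a s x y ∈ a := fun x y => by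
    rw [← hP0, lieBeta, map_sub, hPb, hPs, hPs, hPs, sub_self]
  let f0 : e →ₗ[F] e := s ∘ₗ P + l ∘ₗ P + a.toSubmodule.subtype ∘ₗ φ ∘ₗ q
  have hf : ∀ x, f0 x = s (P x) + l (P x) + (φ (q x) : e) := fun x => rfl
  have hfa : ∀ m : a, f0 (m : e) = φ m := fun m => by
    rw [hf, hPa, hqa]; simp
  have hPl : ∀ x, P (l x) = 0 := fun x => (hP0 _).2 (hl x)
  have hPf : ∀ x, P (f0 x) = P x := fun x => by
    rw [hf, map_add, map_add, hPs, hPl, hPa]; simp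
  have hqb : ∀ x y, q ⁅x, y⁆ = ⟨lieBeta a s (P x) (P y), hβ _ _⟩
      + ⁅s (P x), q y⁆ - ⁅s (P y), q x⁆ := fun x y => by
    apply Subtype.ext
    have h0 := hab _ (q x).2 _ (q y).2
    have h1 : ((⟨lieBeta a s (P x) (P y), hβ _ _⟩
      + ⁅s (P x), q y⁆ - ⁅s (P y), q x⁆ : a) : e) = lieBeta a s (P x) (P y)
      + ⁅s (P x), (q y : e)⁆ - ⁅s (P y), (q x : e)⁆ := rfl
    rw [h1, hq ⁅x, y⁆, hPb, lieBeta]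
    have hx : x = s (P x) + (q x : e) := by rw [hq]; abel
    have hy : y = s (P y) + (q y : e) := by rw [hq]; abel
    have h2 : ⁅x, y⁆ = ⁅s (P x) + (q x : e), s (P y) + (q y : e)⁆ := by rw [← hx, ← hy]
    rw [h2, add_lie, lie_add, lie_add, h0, ← lie_skew (q x : e) (s (P y))]
    abel
  have hbr : ∀ x y, f0 ⁅x, y⁆ = ⁅f0 x, f0 y⁆ := fun x y => by
    have h1 : ((φ (q ⁅x, y⁆) : a) : e) = (φ ⟨lieBeta a s (P x) (P y), hβ _ _⟩ : e)
      + ⁅s (P x), (φ (q y) : e)⁆ - ⁅s (P y), (φ (q x) : e)⁆ := by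
      rw [hqb, map_sub, map_add, hφ, hφ]; rfl
    have h2 := hc (P x) (P y) (hβ _ _)
    rw [sub_eq_iff_eq_add] at h2
    rw [hf ⁅x, y⁆, h1, h2, hPb, hf x, hf y, lieBeta]
    simp only [add_lie, lie_add]
    rw [hab _ (hl _) _ (hl _), hab _ (hl _) _ (φ (q y)).2, hab _ (φ (q x)).2 _ (hl _),
      hab _ (φ (q x)).2 _ (φ (q y)).2, ← lie_skew (φ (q x) : e) (s (P y)),
      ← lie_skew (l (P x)) (s (P y))]
    abel
  refine ⟨{ f0 with map_lie' := fun {x y} => hbr x y }, ⟨?_, ?_⟩, ?_, hfa⟩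
  · change Function.Injective f0
    rw [injective_iff_map_eq_zero]
    intro x hx
    have h1 : P x = 0 := by rw [← hPf, hx, map_zero]
    have h2 : x ∈ a := (hP0 _).1 h1
    have h3 := hfa ⟨x, h2⟩
    have h4 : φ ⟨x, h2⟩ = 0 := by
      apply Subtype.ext; rw [← h3]; exact hx
    have h5 := hbij.1 (h4.trans (map_zero φ).symm)
    exact congrArg Subtype.val h5
  · change Function.Surjective f0
    intro y
    have hm : y - f0 (s (P y)) ∈ a := by
      rw [← hP0, map_sub, hPf, hPs, sub_self]
    obtain ⟨m, hm'⟩ := hbij.2 ⟨_, hm⟩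
    refine ⟨s (P y) + m, ?_⟩
    rw [map_add, hfa, hm']
    exact add_sub_cancel _ _
  · intro x
    change f0 x - x ∈ a
    rw [← hP0, map_sub, hPf, sub_self]
end
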